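/- arXiv:1805.06778 — 3 statements merged into one kernel-verified Lean document; each statement's English description precedes it below -/
import Mathlib

section
/- Let X be a real Banach space with a Schauder basis (e_n). Then (e_n) is almost greedy if and only if there exists a constant C such that for every x ∈ X, every m ∈ ℕ, every greedy ordering for x, every finite set A ⊂ ℕ with |A| ≤ m and A ⊂ {1,…,α_m(x)−1} ∪ {β_m(x)+1, β_m(x)+2, …}, and all real scalars (a_i)_{i∈A}, one has ‖x − G_m(x)‖ ≤ C‖x − Σ_{i∈A} a_i e_i‖. -/
open Filter Topology

/-- A Schauder basis of a real normed space `X`, given by basis vectors `e n` together with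
biorthogonal (coordinate) functionals `f n`, such that every `x` is the limit of its
partial-sum expansion `∑_{n < N} f n x • e n`. -/
structure SchauderBasisSys (X : Type*) [NormedAddCommGroup X] [NormedSpace ℝ X] where
  e : ℕ → X
  f : ℕ → X →L[ℝ] ℝ
  biorth : ∀ m n : ℕ, f m (e n) = if m = n then (1 : ℝ) else 0
  expansion : ∀ x : X,
    Filter.Tendsto (fun N : ℕ => ∑ n ∈ Finset.range N, f n x • e n) Filter.atTop (nhds x)

namespace SchauderBasisSys

variable {X : Type*} [NormedAddCommGroup X] [NormedSpace ℝ X]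

/-- The coordinate projection onto a finite set `A` of indices: `P_A x = ∑_{i ∈ A} e_i^*(x) e_i`. -/
noncomputable def P (S : SchauderBasisSys X) (A : Finset ℕ) (x : X) : X :=
  ∑ i ∈ A, S.f i x • S.e i

/-- The indicator vector `1_A = ∑_{i ∈ A} e_i`. -/
noncomputable def ind (S : SchauderBasisSys X) (A : Finset ℕ) : X :=
  ∑ i ∈ A, S.e i

/-- A greedy ordering for `x`: an injection `ρ : ℕ → ℕ` whose range contains the support of `x`
and which rearranges the coordinates of `x` in nonincreasing order of absolute value. -/
def IsGreedyOrdering (S : SchauderBasisSys X) (x : X) (ρ : ℕ → ℕ) : Prop :=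
  Function.Injective ρ ∧ (∀ n : ℕ, S.f n x ≠ 0 → n ∈ Set.range ρ) ∧
    ∀ j k : ℕ, j ≤ k → |S.f (ρ k) x| ≤ |S.f (ρ j) x|

/-- The greedy set `Λ_m(x) = {ρ(0), …, ρ(m-1)}` associated to a greedy ordering `ρ`. -/
def Lam (ρ : ℕ → ℕ) (m : ℕ) : Finset ℕ := (Finset.range m).image ρ

/-- The `m`-th greedy approximation `G_m(x) = ∑_{j < m} e_{ρ(j)}^*(x) e_{ρ(j)}`. -/
noncomputable def G (S : SchauderBasisSys X) (x : X) (ρ : ℕ → ℕ) (m : ℕ) : X :=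
  ∑ j ∈ Finset.range m, S.f (ρ j) x • S.e (ρ j)

/-- Quasi-greedy: `‖G_m(x)‖ ≤ K ‖x‖` uniformly. -/
def QuasiGreedy (S : SchauderBasisSys X) : Prop :=
  ∃ K : ℝ, ∀ (x : X) (ρ : ℕ → ℕ) (m : ℕ),
    S.IsGreedyOrdering x ρ → ‖S.G x ρ m‖ ≤ K * ‖x‖

/-- Conservative: `‖1_A‖ ≤ Γ ‖1_B‖` whenever `|A| ≤ |B|` and `max A < min B`. -/
def Conservative (S : SchauderBasisSys X) : Prop :=
  ∃ Γ : ℝ, ∀ A B : Finset ℕ, A.card ≤ B.card →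
    (∀ i ∈ A, ∀ j ∈ B, i < j) → ‖S.ind A‖ ≤ Γ * ‖S.ind B‖

/-- Reverse conservative: `‖1_A‖ ≤ Γ ‖1_B‖` whenever `|A| ≤ |B|` and `max B < min A`. -/
def ReverseConservative (S : SchauderBasisSys X) : Prop :=
  ∃ Γ : ℝ, ∀ A B : Finset ℕ, A.card ≤ B.card →
    (∀ i ∈ A, ∀ j ∈ B, j < i) → ‖S.ind A‖ ≤ Γ * ‖S.ind B‖

/-- Partially greedy: `‖x - G_m(x)‖ ≤ C ‖∑_{n ≥ m} e_n^*(x) e_n‖ = C ‖x - P_{[0,m)}(x)‖`. -/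
def PartiallyGreedy (S : SchauderBasisSys X) : Prop :=
  ∃ C : ℝ, ∀ (x : X) (ρ : ℕ → ℕ) (m : ℕ), S.IsGreedyOrdering x ρ →
    ‖x - S.G x ρ m‖ ≤ C * ‖x - S.P (Finset.range m) x‖

/-- Almost greedy: `‖x - G_m(x)‖ ≤ C inf{‖x - P_A(x)‖ : |A| ≤ m}`. -/
def AlmostGreedy (S : SchauderBasisSys X) : Prop :=
  ∃ C : ℝ, ∀ (x : X) (ρ : ℕ → ℕ) (m : ℕ) (A : Finset ℕ), S.IsGreedyOrdering x ρ →
    A.card ≤ m → ‖x - S.G x ρ m‖ ≤ C * ‖x - S.P A x‖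

end SchauderBasisSys

open SchauderBasisSys

/-!
Both conditions give, with some constant `C`, the almost greedy inequality for those `A` that lie
outside the hull of the greedy set `Λ`. Applied to a vector supported on `A ∪ Λ`, this weak form
says that `‖u‖ ≤ C ‖v‖` whenever `u` is supported outside the hull of the support of `v`, on no
more indices, and has coefficients no larger than those of `v`. Passing through a constant vector
supported far to the right removes the condition on the position of the supports, at the cost of
replacing `C` by `C ^ 2`.

Now let `z = x - ∑ i ∈ A, a i • e i` with `A` disjoint from `Λ`, and enlarge `Λ` to the greedy set
`B` of `z` that contains also the `i ∈ A` at which `z` is large. Then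
`x - P_Λ x = (z - P_B z) + P_A x - P_(A \ B) z`, where the last two vectors have coefficients
bounded by those of `P_B z`, and `‖P_B z‖ ≤ (1 + C) ‖z‖`. Hence approximation from any `A` disjoint
from `Λ` with arbitrary coefficients is controlled, and this implies both conditions.
-/

theorem eq_range_card_of_isLowerSet {s : Finset ℕ} (hs : IsLowerSet (s : Set ℕ)) :
    s = Finset.range s.card := by
  refine Finset.eq_of_subset_of_card_le (fun n hn => ?_) (Finset.card_range _).le
  have hsub : Finset.range (n + 1) ⊆ s := fun k hk =>
    hs (Nat.lt_succ_iff.1 (Finset.mem_range.1 hk)) hn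
  simpa using Finset.card_le_card hsub

theorem exists_perm_antitone_comp {α : Type*} [LinearOrder α] {key : ℕ → α}
    (hkey : ∀ᶠ n in atTop, ∀ k, key n ≤ key k) :
    ∃ σ : Equiv.Perm ℕ, Antitone (key ∘ σ) := by
  obtain ⟨N, hN⟩ := eventually_atTop.1 hkey
  let τ := Tuple.sort fun i : Fin N => OrderDual.toDual (key i)
  let σ := τ.extendDomain Fin.equivSubtype
  have hσ (i : ℕ) (hi : i < N) : σ i = τ ⟨i, hi⟩ :=
    τ.extendDomain_apply_image Fin.equivSubtype ⟨i, hi⟩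
  refine ⟨σ, fun j k hjk => ?_⟩
  rcases lt_or_ge k N with hk | hk
  · have hsort := Tuple.monotone_sort (fun i : Fin N => OrderDual.toDual (key i))
      (show (⟨j, hjk.trans_lt hk⟩ : Fin N) ≤ ⟨k, hk⟩ from hjk)
    simpa only [Function.comp_apply, hσ k hk, hσ j (hjk.trans_lt hk)] using
      OrderDual.toDual_le_toDual.1 hsort
  · have hσk : σ k = k := τ.extendDomain_apply_not_subtype Fin.equivSubtype hk.not_gt
    simpa only [Function.comp_apply, hσk] using hN k hk (σ j)

/-- The set `A` avoids the interval `[min B, max B]`; this is the position of `A` relative to the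
greedy set in the theorem, and it holds vacuously for `B = ∅`. -/
def OutsideHull (A B : Finset ℕ) : Prop :=
  ∀ i ∈ A, (∀ j ∈ B, i < j) ∨ (∀ j ∈ B, j < i)

theorem OutsideHull.disjoint {A B : Finset ℕ} (h : OutsideHull A B) : Disjoint A B :=
  Finset.disjoint_left.2 fun i hA hB =>
    (h i hA).elim (fun hlt => (hlt i hB).false) (fun hgt => (hgt i hB).false)

theorem exists_card_eq_and_forall_lt (s : Finset ℕ) (n : ℕ) :
    ∃ D : Finset ℕ, D.card = n ∧ ∀ i ∈ s, ∀ j ∈ D, i < j := by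
  refine ⟨Finset.Ico (s.sup id + 1) (s.sup id + 1 + n), by simp, fun i hi j hj => ?_⟩
  exact (Nat.lt_succ_of_le (Finset.le_sup (f := id) hi)).trans_le (Finset.mem_Ico.1 hj).1

namespace SchauderBasisSys

variable {X : Type*} [NormedAddCommGroup X] [NormedSpace ℝ X] {S : SchauderBasisSys X}

section Coordinates

variable (S)

theorem coord_sum (A : Finset ℕ) (a : ℕ → ℝ) (n : ℕ) :
    S.f n (∑ i ∈ A, a i • S.e i) = if n ∈ A then a n else 0 := by
  simp [S.biorth]

theorem coord_P (A : Finset ℕ) (x : X) (n : ℕ) :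
    S.f n (S.P A x) = if n ∈ A then S.f n x else 0 :=
  S.coord_sum A (fun i => S.f i x) n

theorem ext_coord {x y : X} (h : ∀ n, S.f n x = S.f n y) : x = y :=
  tendsto_nhds_unique (S.expansion x) (by simpa only [h] using S.expansion y)

@[simp]
theorem P_empty (x : X) : S.P ∅ x = 0 :=
  Finset.sum_empty

theorem continuous_P (A : Finset ℕ) : Continuous (S.P A) :=
  continuous_finsetSum A fun i _ => (S.f i).continuous.smul continuous_const

theorem P_sum_add_sum {A B : Finset ℕ} (hAB : Disjoint A B) (u v : ℕ → ℝ) :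
    S.P A (∑ i ∈ A, u i • S.e i + ∑ i ∈ B, v i • S.e i) = ∑ i ∈ A, u i • S.e i := by
  refine Finset.sum_congr rfl fun i hi => ?_
  rw [map_add, coord_sum, coord_sum, if_pos hi, if_neg (Finset.disjoint_left.1 hAB hi), add_zero]

theorem e_ne_zero (n : ℕ) : S.e n ≠ 0 := fun h => by
  simpa [h] using S.biorth n n

end Coordinates

section GreedySets

variable (S) in
/-- A greedy set of `x`: a set of indices carrying the largest coordinates of `x`. These are the
sets `Λ_m(x)` freed from the choice of a greedy ordering. -/
def IsGreedySet (x : X) (Λ : Finset ℕ) : Prop :=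
  ∀ i ∈ Λ, ∀ j ∉ Λ, |S.f j x| ≤ |S.f i x|

theorem card_Lam {ρ : ℕ → ℕ} (hρ : Function.Injective ρ) (m : ℕ) : (Lam ρ m).card = m := by
  rw [Lam, Finset.card_image_of_injective _ hρ, Finset.card_range]

theorem IsGreedyOrdering.G_eq_P {x : X} {ρ : ℕ → ℕ} (h : S.IsGreedyOrdering x ρ) (m : ℕ) :
    S.G x ρ m = S.P (Lam ρ m) x :=
  (Finset.sum_image (f := fun i => S.f i x • S.e i) h.1.injOn).symm

theorem IsGreedyOrdering.isGreedySet_Lam {x : X} {ρ : ℕ → ℕ} (h : S.IsGreedyOrdering x ρ)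
    (m : ℕ) : S.IsGreedySet x (Lam ρ m) := by
  obtain ⟨-, hsupp, hanti⟩ := h
  intro i hi j hj
  obtain ⟨k, hk, rfl⟩ := Finset.mem_image.1 hi
  by_cases hj0 : S.f j x = 0
  · simp [hj0]
  obtain ⟨l, rfl⟩ := hsupp j hj0
  have hml : m ≤ l := by
    by_contra! hl
    exact hj (Finset.mem_image_of_mem ρ (Finset.mem_range.2 hl))
  exact hanti k l ((Finset.mem_range.1 hk).le.trans hml)

theorem IsGreedySet.exists_isGreedyOrdering {x : X} {Λ : Finset ℕ} (hΛ : S.IsGreedySet x Λ)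
    (hx : ∀ᶠ n in atTop, S.f n x = 0) :
    ∃ ρ, S.IsGreedyOrdering x ρ ∧ Lam ρ Λ.card = Λ := by
  -- Sorting lexicographically makes `Λ` win the ties among coordinates of equal size.
  let key (n : ℕ) : ℝ ×ₗ Prop := toLex (|S.f n x|, n ∈ Λ)
  have hkey_min : ∀ᶠ n in atTop, ∀ k, key n ≤ key k := by
    filter_upwards [hx, eventually_gt_atTop (Λ.sup id)] with n hn hΛn k
    have hnΛ : n ∉ Λ := fun h => hΛn.not_ge (Finset.le_sup (f := id) h)
    exact Prod.Lex.toLex_mono ⟨by simp [hn], fun h => (hnΛ h).elim⟩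
  obtain ⟨σ, hσ⟩ := exists_perm_antitone_comp hkey_min
  have hanti (j k : ℕ) (hjk : j ≤ k) : |S.f (σ k) x| ≤ |S.f (σ j) x| :=
    Prod.Lex.monotone_fst _ _ (hσ hjk)
  have hlower : IsLowerSet (Λ.image σ.symm : Set ℕ) := by
    intro k j hjk hk
    simp only [Finset.coe_image, Equiv.image_symm_eq_preimage, Set.mem_preimage,
      Finset.mem_coe] at hk ⊢
    by_contra hj
    rcases Prod.Lex.le_iff.1 (hσ hjk) with hlt | ⟨-, hle⟩
    · exact (hΛ _ hk _ hj).not_gt hlt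
    · exact hj (hle hk)
  refine ⟨σ, ⟨σ.injective, fun n _ => σ.surjective n, hanti⟩, ?_⟩
  have hrange := eq_range_card_of_isLowerSet hlower
  rw [Finset.card_image_of_injective _ σ.symm.injective] at hrange
  rw [Lam, ← hrange, Finset.image_image]
  simp

theorem IsGreedySet.P_range {x : X} {Λ : Finset ℕ} (hΛ : S.IsGreedySet x Λ) {N : ℕ}
    (hN : Λ ⊆ Finset.range N) : S.IsGreedySet (S.P (Finset.range N) x) Λ := by
  intro i hi j hj
  rw [coord_P, coord_P, if_pos (hN hi)]
  split_ifs
  · exact hΛ i hi j hj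
  · simp

-- A vector of infinite support need not have a greedy ordering beginning with a given greedy
-- set, but its partial sums do.
theorem IsGreedySet.norm_sub_P_le_of_isGreedyOrdering {x : X} {Λ : Finset ℕ}
    (hΛ : S.IsGreedySet x Λ) {T : X → X} (hT : Continuous T) {C : ℝ}
    (h : ∀ y ρ, S.IsGreedyOrdering y ρ → Lam ρ Λ.card = Λ →
      ‖y - S.G y ρ Λ.card‖ ≤ C * ‖y - T y‖) :
    ‖x - S.P Λ x‖ ≤ C * ‖x - T x‖ := by
  have hlim : Tendsto (fun N => S.P (Finset.range N) x) atTop (𝓝 x) := S.expansion x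
  have hleft : Continuous fun y => ‖y - S.P Λ y‖ := (continuous_id.sub (S.continuous_P Λ)).norm
  have hright : Continuous fun y => C * ‖y - T y‖ := (continuous_id.sub hT).norm.const_mul C
  refine le_of_tendsto_of_tendsto ((hleft.tendsto x).comp hlim) ((hright.tendsto x).comp hlim) ?_
  filter_upwards [eventually_gt_atTop (Λ.sup id)] with N hN
  have hsub : Λ ⊆ Finset.range N := fun i hi =>
    Finset.mem_range.2 ((Finset.le_sup (f := id) hi).trans_lt hN)
  have hfin : ∀ᶠ n in atTop, S.f n (S.P (Finset.range N) x) = 0 := by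
    filter_upwards [eventually_ge_atTop N] with n hn
    rw [coord_P, if_neg (by simpa using hn)]
  obtain ⟨ρ, hρ, hLam⟩ := (hΛ.P_range hsub).exists_isGreedyOrdering hfin
  simpa only [hρ.G_eq_P, hLam, Function.comp_apply] using h _ ρ hρ hLam

end GreedySets

section OuterAlmostGreedy

variable (S) in
/-- The almost greedy inequality with constant `C`, required only for projections onto sets outside
the hull of the greedy set. This is the common weakening of the two conditions of the theorem. -/
def OuterAlmostGreedyWith (C : ℝ) : Prop :=
  ∀ (x : X) (Λ A : Finset ℕ), S.IsGreedySet x Λ → A.card ≤ Λ.card → OutsideHull A Λ →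
    ‖x - S.P Λ x‖ ≤ C * ‖x - S.P A x‖

theorem AlmostGreedy.exists_outerAlmostGreedyWith (h : S.AlmostGreedy) :
    ∃ C, S.OuterAlmostGreedyWith C := by
  obtain ⟨C, hC⟩ := h
  exact ⟨C, fun x Λ A hΛ hcard _ => hΛ.norm_sub_P_le_of_isGreedyOrdering (S.continuous_P A)
    fun y ρ hρ _ => hC y ρ Λ.card A hρ hcard⟩

namespace OuterAlmostGreedyWith

variable {C : ℝ}

theorem norm_sub_P_le (h : S.OuterAlmostGreedyWith C) {x : X} {Λ : Finset ℕ}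
    (hΛ : S.IsGreedySet x Λ) : ‖x - S.P Λ x‖ ≤ C * ‖x‖ := by
  simpa using h x Λ ∅ hΛ (by simp) (by simp [OutsideHull])

theorem norm_P_le (h : S.OuterAlmostGreedyWith C) {x : X} {Λ : Finset ℕ}
    (hΛ : S.IsGreedySet x Λ) : ‖S.P Λ x‖ ≤ (1 + C) * ‖x‖ := by
  have htri : ‖S.P Λ x‖ ≤ ‖x‖ + ‖x - S.P Λ x‖ := by
    simpa using norm_sub_le x (x - S.P Λ x)
  linarith [h.norm_sub_P_le hΛ]

theorem one_le (h : S.OuterAlmostGreedyWith C) : 1 ≤ C := by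
  have he : ‖S.e 0‖ ≤ C * ‖S.e 0‖ := by
    simpa using h.norm_sub_P_le (x := S.e 0) (Λ := ∅) (by simp [IsGreedySet])
  exact one_le_of_le_mul_right₀ (norm_pos_iff.2 (S.e_ne_zero 0)) he

theorem norm_sum_le_of_outsideHull (h : S.OuterAlmostGreedyWith C) {A B : Finset ℕ}
    {u v : ℕ → ℝ} (hcard : A.card ≤ B.card) (hAB : OutsideHull A B)
    (huv : ∀ i ∈ A, ∀ j ∈ B, |u i| ≤ |v j|) :
    ‖∑ i ∈ A, u i • S.e i‖ ≤ C * ‖∑ i ∈ B, v i • S.e i‖ := by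
  set x := ∑ i ∈ A, u i • S.e i + ∑ i ∈ B, v i • S.e i with hx
  have hdisj := hAB.disjoint
  have hB : S.IsGreedySet x B := by
    intro j hj i hi
    rw [hx, map_add, map_add, coord_sum, coord_sum, coord_sum, coord_sum, if_pos hj, if_neg hi,
      if_neg (Finset.disjoint_right.1 hdisj hj), zero_add, add_zero]
    split_ifs with hiA
    · exact huv i hiA j hj
    · simp
  have hPA : S.P A x = ∑ i ∈ A, u i • S.e i := S.P_sum_add_sum hdisj u v
  have hPB : S.P B x = ∑ i ∈ B, v i • S.e i := by
    rw [hx, add_comm, S.P_sum_add_sum hdisj.symm]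
  have hxBA := h x B A hB hcard hAB
  rwa [hPA, hPB, hx, add_sub_cancel_left, add_sub_cancel_right] at hxBA

theorem norm_sum_le (h : S.OuterAlmostGreedyWith C) {A B : Finset ℕ} {u v : ℕ → ℝ}
    (hcard : A.card ≤ B.card) (huv : ∀ i ∈ A, ∀ j ∈ B, |u i| ≤ |v j|) :
    ‖∑ i ∈ A, u i • S.e i‖ ≤ C ^ 2 * ‖∑ i ∈ B, v i • S.e i‖ := by
  rcases A.eq_empty_or_nonempty with rfl | hA
  · simpa using by positivity
  have hC : 0 ≤ C := zero_le_one.trans h.one_le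
  obtain ⟨k, hk, hmax⟩ := A.exists_max_image (fun i => |u i|) hA
  obtain ⟨D, hDcard, hD⟩ := exists_card_eq_and_forall_lt (A ∪ B) A.card
  calc ‖∑ i ∈ A, u i • S.e i‖
    _ ≤ C * ‖∑ i ∈ D, u k • S.e i‖ :=
      h.norm_sum_le_of_outsideHull hDcard.ge
        (fun i hi => .inl fun j hj => hD i (Finset.mem_union_left B hi) j hj)
        fun i hi _ _ => hmax i hi
    _ ≤ C * (C * ‖∑ i ∈ B, v i • S.e i‖) := by
      gcongr
      exact h.norm_sum_le_of_outsideHull (hDcard.trans_le hcard)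
        (fun j hj => .inr fun i hi => hD i (Finset.mem_union_right A hi) j hj)
        fun _ _ j hj => huv k hk j hj
    _ = C ^ 2 * ‖∑ i ∈ B, v i • S.e i‖ := by ring

end OuterAlmostGreedyWith

end OuterAlmostGreedy

section DisjointGreedy

variable (S) in
/-- The greedy inequality with constant `C` and arbitrary coefficients, for approximants supported
on sets disjoint from the greedy set. -/
def DisjointGreedyWith (C : ℝ) : Prop :=
  ∀ (x : X) (Λ A : Finset ℕ) (a : ℕ → ℝ), S.IsGreedySet x Λ → A.card ≤ Λ.card → Disjoint A Λ →
    ‖x - S.P Λ x‖ ≤ C * ‖x - ∑ i ∈ A, a i • S.e i‖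

theorem IsGreedySet.exists_superset_of_eq_off {x z : X} {Λ A : Finset ℕ}
    (hΛ : S.IsGreedySet x Λ) (hAΛ : Disjoint A Λ) (hz : ∀ i ∉ A, S.f i z = S.f i x) :
    ∃ B, Λ ⊆ B ∧ B ⊆ Λ ∪ A ∧ S.IsGreedySet z B ∧ ∀ i ∉ Λ, ∀ j ∈ B, |S.f i x| ≤ |S.f j z| := by
  classical
  let B := Λ ∪ A.filter fun i => ∃ k ∈ Λ, |S.f k x| < |S.f i z|
  have hinside : ∀ j ∈ B, ∃ k ∈ Λ, |S.f k x| ≤ |S.f j z| := by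
    intro j hj
    rcases Finset.mem_union.1 hj with hjΛ | hjA
    · exact ⟨j, hjΛ, by rw [hz j (Finset.disjoint_right.1 hAΛ hjΛ)]⟩
    · obtain ⟨-, k, hk, hlt⟩ := Finset.mem_filter.1 hjA
      exact ⟨k, hk, hlt.le⟩
  have houtside : ∀ i ∉ B, ∀ k ∈ Λ, |S.f i z| ≤ |S.f k x| := by
    intro i hi k hk
    have hiΛ : i ∉ Λ := fun hiΛ => hi (Finset.mem_union_left _ hiΛ)
    by_cases hiA : i ∈ A
    · by_contra! hlt
      exact hi (Finset.mem_union_right _ (Finset.mem_filter.2 ⟨hiA, k, hk, hlt⟩))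
    · rw [hz i hiA]
      exact hΛ k hk i hiΛ
  refine ⟨B, Finset.subset_union_left,
    Finset.union_subset_union_right (Finset.filter_subset _ A), fun j hj i hi => ?_,
    fun i hi j hj => ?_⟩
  · obtain ⟨k, hk, hkj⟩ := hinside j hj
    exact (houtside i hi k hk).trans hkj
  · obtain ⟨k, hk, hkj⟩ := hinside j hj
    exact (hΛ k hk i hi).trans hkj

theorem sub_P_eq_of_eq_off {x z : X} {Λ A B : Finset ℕ} (hAΛ : Disjoint A Λ)
    (hz : ∀ i ∉ A, S.f i z = S.f i x) (hΛB : Λ ⊆ B) (hB : B ⊆ Λ ∪ A) :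
    x - S.P Λ x = (z - S.P B z) + S.P A x - S.P (A \ B) z := by
  refine S.ext_coord fun n => ?_
  simp only [map_sub, map_add, coord_P, Finset.mem_sdiff]
  by_cases hA : n ∈ A
  · by_cases hnB : n ∈ B <;> simp [hA, hnB, Finset.disjoint_left.1 hAΛ hA]
  · have hiff : n ∈ B ↔ n ∈ Λ := ⟨fun h => (Finset.mem_union.1 (hB h)).resolve_right hA, @hΛB n⟩
    simp [hA, hiff, hz n hA]

theorem OuterAlmostGreedyWith.disjointGreedyWith {C : ℝ} (h : S.OuterAlmostGreedyWith C) :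
    S.DisjointGreedyWith (C + 2 * C ^ 2 * (1 + C)) := by
  intro x Λ A a hΛ hcard hAΛ
  set z := x - ∑ i ∈ A, a i • S.e i with hz
  have hzx : ∀ i ∉ A, S.f i z = S.f i x := fun i hi => by
    rw [hz, map_sub, coord_sum, if_neg hi, sub_zero]
  obtain ⟨B, hΛB, hB, hBz, hxz⟩ := hΛ.exists_superset_of_eq_off hAΛ hzx
  have hcardB : A.card ≤ B.card := hcard.trans (Finset.card_le_card hΛB)
  have hPA : ‖S.P A x‖ ≤ C ^ 2 * ‖S.P B z‖ :=
    h.norm_sum_le hcardB fun i hi => hxz i (Finset.disjoint_left.1 hAΛ hi)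
  have hPAB : ‖S.P (A \ B) z‖ ≤ C ^ 2 * ‖S.P B z‖ :=
    h.norm_sum_le ((Finset.card_le_card Finset.sdiff_subset).trans hcardB)
      fun i hi j hj => hBz j hj i (Finset.mem_sdiff.1 hi).2
  calc ‖x - S.P Λ x‖
    _ = ‖(z - S.P B z) + S.P A x - S.P (A \ B) z‖ := by rw [sub_P_eq_of_eq_off hAΛ hzx hΛB hB]
    _ ≤ ‖z - S.P B z‖ + ‖S.P A x‖ + ‖S.P (A \ B) z‖ :=
      (norm_sub_le _ _).trans (by gcongr; exact norm_add_le _ _)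
    _ ≤ C * ‖z‖ + 2 * C ^ 2 * ‖S.P B z‖ := by linarith [h.norm_sub_P_le hBz]
    _ ≤ C * ‖z‖ + 2 * C ^ 2 * ((1 + C) * ‖z‖) := by gcongr; exact h.norm_P_le hBz
    _ = (C + 2 * C ^ 2 * (1 + C)) * ‖z‖ := by ring

theorem IsGreedySet.sdiff {x : X} {Λ : Finset ℕ} (hΛ : S.IsGreedySet x Λ) (A : Finset ℕ) :
    S.IsGreedySet (x - S.P (A ∩ Λ) x) (Λ \ A) := by
  intro i hi j hj
  have hiA := (Finset.mem_sdiff.1 hi).2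
  have hiΛ := (Finset.mem_sdiff.1 hi).1
  simp only [map_sub, coord_P, Finset.mem_inter, hiA, false_and, if_false, sub_zero]
  split_ifs with hjAΛ
  · simp
  · rw [sub_zero]
    exact hΛ i hiΛ j fun hjΛ => hj (Finset.mem_sdiff.2 ⟨hjΛ, fun hjA => hjAΛ ⟨hjA, hjΛ⟩⟩)

theorem DisjointGreedyWith.norm_sub_P_le {C : ℝ} (h : S.DisjointGreedyWith C) {x : X}
    {Λ A : Finset ℕ} (hΛ : S.IsGreedySet x Λ) (hcard : A.card ≤ Λ.card) :
    ‖x - S.P Λ x‖ ≤ C * ‖x - S.P A x‖ := by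
  set y := x - S.P (A ∩ Λ) x with hy
  have hΛy : y - S.P (Λ \ A) y = x - S.P Λ x := by
    refine S.ext_coord fun n => ?_
    simp only [hy, map_sub, coord_P, Finset.mem_sdiff, Finset.mem_inter]
    by_cases hA : n ∈ A <;> simp [hA]
  have hAy : y - S.P (A \ Λ) x = x - S.P A x := by
    rw [hy, sub_sub, P, P, Finset.sum_inter_add_sum_sdiff, P]
  rw [← hΛy, ← hAy]
  exact h y (Λ \ A) (A \ Λ) (fun i => S.f i x) (hΛ.sdiff A)
    (Finset.card_sdiff_le_card_sdiff_iff.2 hcard) disjoint_sdiff_sdiff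

theorem DisjointGreedyWith.almostGreedy {C : ℝ} (h : S.DisjointGreedyWith C) :
    S.AlmostGreedy := by
  refine ⟨C, fun x ρ m A hρ hcard => ?_⟩
  rw [hρ.G_eq_P]
  exact h.norm_sub_P_le (hρ.isGreedySet_Lam m) (by rwa [card_Lam hρ.1])

end DisjointGreedy

end SchauderBasisSys

theorem stmt_7_general {X : Type*} [NormedAddCommGroup X] [NormedSpace ℝ X]
    (S : SchauderBasisSys X) :
    List.TFAE [
      S.AlmostGreedy,
      ∃ C : ℝ, ∀ (x : X) (ρ : ℕ → ℕ) (m : ℕ) (A : Finset ℕ) (a : ℕ → ℝ),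
        S.IsGreedyOrdering x ρ → A.card ≤ m → Disjoint A (Lam ρ m) →
        ‖x - S.G x ρ m‖ ≤ C * ‖x - ∑ i ∈ A, a i • S.e i‖,
      ∃ C : ℝ, ∀ (x : X) (ρ : ℕ → ℕ) (m : ℕ) (A : Finset ℕ) (a : ℕ → ℝ),
        S.IsGreedyOrdering x ρ → A.card ≤ m → OutsideHull A (Lam ρ m) →
        ‖x - S.G x ρ m‖ ≤ C * ‖x - ∑ i ∈ A, a i • S.e i‖] := by
  tfae_have 1 → 2 := fun h => by
    obtain ⟨C, hC⟩ := h.exists_outerAlmostGreedyWith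
    refine ⟨C + 2 * C ^ 2 * (1 + C), fun x ρ m A a hρ hcard hdisj => ?_⟩
    rw [hρ.G_eq_P]
    exact hC.disjointGreedyWith x _ A a (hρ.isGreedySet_Lam m) (by rwa [card_Lam hρ.1]) hdisj
  tfae_have 2 → 3 := fun ⟨C, hC⟩ =>
    ⟨C, fun x ρ m A a hρ hcard hhull => hC x ρ m A a hρ hcard hhull.disjoint⟩
  tfae_have 3 → 1 := fun ⟨C, hC⟩ => by
    have houter : S.OuterAlmostGreedyWith C := fun x Λ A hΛ hcard hhull =>
      hΛ.norm_sub_P_le_of_isGreedyOrdering (T := fun _ => S.P A x) continuous_const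
        fun y ρ hρ hLam => hC y ρ Λ.card A (fun i => S.f i x) hρ hcard (by rwa [hLam])
    exact houter.disjointGreedyWith.almostGreedy
  tfae_finish

/-- A Schauder basis of a real Banach space is almost greedy if and only
if there is a constant `C` such that `‖x - G_m(x)‖ ≤ C ‖x - ∑_{i ∈ A} a_i e_i‖` for every
`x`, `m`, every greedy ordering, every finite `A` with `|A| ≤ m` contained in
`{1,…,α_m(x)-1} ∪ {β_m(x)+1,…}` (each element of `A` lies below `min Λ_m(x)` or above
`max Λ_m(x)`), and all real scalars `(a_i)`. -/
theorem stmt_7 {X : Type*} [NormedAddCommGroup X] [NormedSpace ℝ X] [CompleteSpace X]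
    (S : SchauderBasisSys X) :
    S.AlmostGreedy ↔
      ∃ C : ℝ, ∀ (x : X) (ρ : ℕ → ℕ) (m : ℕ) (A : Finset ℕ) (a : ℕ → ℝ),
        S.IsGreedyOrdering x ρ → A.card ≤ m →
        (∀ i ∈ A, (∀ j ∈ Lam ρ m, i < j) ∨ (∀ j ∈ Lam ρ m, j < i)) →
        ‖x - S.G x ρ m‖ ≤ C * ‖x - ∑ i ∈ A, a i • S.e i‖ :=
  (stmt_7_general S).out 0 2
end

section
/- Let ((e_n),(e_n^*)) be a bounded Markushevich basis of a real Banach space X. Then (e_n) is almost greedy if and only if for every λ with 0 ≤ λ < 1 there exists a constant C such that for every x ∈ X, every m ∈ ℕ, every greedy ordering for x, every finite set A ⊂ ℕ with |A| ≤ m and |A ∩ Λ_m(x)| ≤ λm, and all real scalars (a_i)_{i∈A}, one has ‖x − G_m(x)‖ ≤ C‖x − Σ_{i∈A} a_i e_i‖. -/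
/-- A bounded Markushevich basis of a real normed space `X`: a biorthogonal system
`((e_n), (f_n))` whose vectors have dense linear span, whose functionals separate points,
and which is bounded: `a < ‖e_n‖, ‖f_n‖ < b` for some constants `0 < a < b`. -/
structure BddMarkushevichBasis (X : Type*) [NormedAddCommGroup X] [NormedSpace ℝ X] where
  e : ℕ → X
  f : ℕ → X →L[ℝ] ℝ
  biorth : ∀ m n : ℕ, f m (e n) = if m = n then (1 : ℝ) else 0
  dense_span : Dense (Submodule.span ℝ (Set.range e) : Set X)
  separating : ∀ x y : X, (∀ n : ℕ, f n x = f n y) → x = y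
  a : ℝ
  b : ℝ
  ha : 0 < a
  e_bounds : ∀ n : ℕ, a < ‖e n‖ ∧ ‖e n‖ < b
  f_bounds : ∀ n : ℕ, a < ‖f n‖ ∧ ‖f n‖ < b

namespace BddMarkushevichBasis

variable {X : Type*} [NormedAddCommGroup X] [NormedSpace ℝ X]

/-- The coordinate projection onto a finite set `A` of indices: `P_A x = ∑_{i ∈ A} e_i^*(x) e_i`. -/
noncomputable def P (M : BddMarkushevichBasis X) (A : Finset ℕ) (x : X) : X :=
  ∑ i ∈ A, M.f i x • M.e i

/-- A greedy ordering for `x`: an injection `ρ : ℕ → ℕ` whose range contains the support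
of `x` and which rearranges the coordinates of `x` in nonincreasing order of absolute
value. -/
def IsGreedyOrdering (M : BddMarkushevichBasis X) (x : X) (ρ : ℕ → ℕ) : Prop :=
  Function.Injective ρ ∧ (∀ n : ℕ, M.f n x ≠ 0 → n ∈ Set.range ρ) ∧
    ∀ j k : ℕ, j ≤ k → |M.f (ρ k) x| ≤ |M.f (ρ j) x|

/-- The greedy set `Λ_m(x) = {ρ(0), …, ρ(m-1)}` associated to a greedy ordering `ρ`. -/
def Lam (ρ : ℕ → ℕ) (m : ℕ) : Finset ℕ := (Finset.range m).image ρ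

/-- The `m`-th greedy approximation `G_m(x) = ∑_{j < m} e_{ρ(j)}^*(x) e_{ρ(j)}`. -/
noncomputable def G (M : BddMarkushevichBasis X) (x : X) (ρ : ℕ → ℕ) (m : ℕ) : X :=
  ∑ j ∈ Finset.range m, M.f (ρ j) x • M.e (ρ j)

/-- Almost greedy: `‖x - G_m(x)‖ ≤ C inf{‖x - P_A(x)‖ : |A| ≤ m}`. -/
def AlmostGreedy (M : BddMarkushevichBasis X) : Prop :=
  ∃ C : ℝ, ∀ (x : X) (ρ : ℕ → ℕ) (m : ℕ) (A : Finset ℕ), M.IsGreedyOrdering x ρ →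
    A.card ≤ m → ‖x - M.G x ρ m‖ ≤ C * ‖x - M.P A x‖

end BddMarkushevichBasis

open BddMarkushevichBasis

/-!
Only the greedy sets `Γ` of `x` matter, i.e. the finite sets on which the coordinates of `x`
dominate all the others: since the coordinates of `x` tend to zero, each of them is an initial
segment of a greedy ordering.

Let the basis be almost greedy and let `z` differ from `x` only in the coordinates in `A`. Then `z`
has a greedy set `H` with `H \ A = Γ \ A` whose coordinates dominate those of `x` off `Γ`, and
`x - P Γ x = (z - P H z) + P (A \ Γ) x - P (A \ H) z`. The first term is at most `C ‖z‖`. The other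
two are sums over subsets of `A` of terms with coefficients dominated by those of `z` on `H`. Such a
sum over at most `#H` indices is exchanged for one over far away indices, where `z` is nearly zero,
and the latter for `P H z`; each exchange is an instance of almost greediness. If
`#(A ∩ Γ) ≤ λ #Γ`, then `#A` is at most a multiple of `#(Γ \ A) ≤ #H`, so boundedly many such
sums suffice.

Conversely, `x - P Γ x` and `x - P A x` do not change when `A ∩ Γ` is removed from the support of
`x`, from `Γ` and from `A`, after which the overlap of `A` and `Γ` is empty.
-/

section

open Filter Finset Topology

theorem exists_seq_of_forall_finset_image_range {ι : Type*} [DecidableEq ι]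
    {r : Finset ι → ι → Prop} (h : ∀ T, ∃ n, r T n) :
    ∃ ρ : ℕ → ι, ∀ k, r ((range k).image ρ) (ρ k) := by
  choose next hnext using h
  let extend : Finset ι → Finset ι := fun S => insert (next S) S
  let T : ℕ → Finset ι := fun k => extend^[k] ∅
  have hT : ∀ k, (range k).image (fun j => next (T j)) = T k := by
    intro k
    induction k with
    | zero => rfl
    | succ k ih =>
      rw [range_add_one, image_insert, ih]
      exact (Function.iterate_succ_apply' extend k ∅).symm
  exact ⟨fun k => next (T k), fun k => hT k ▸ hnext (T k)⟩

variable {ι α : Type*} [LinearOrder α] [TopologicalSpace α] [OrderTopology α] {g : ι → α} {a : α}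

theorem exists_mem_forall_le_of_tendsto_cofinite (ha : ∀ i, a ≤ g i)
    (hlim : Tendsto g cofinite (𝓝 a)) {s : Set ι} (hs : s.Nonempty) :
    ∃ n ∈ s, ∀ k ∈ s, g k ≤ g n := by
  by_cases hpos : ∃ n ∈ s, a < g n
  · obtain ⟨n, hns, hn⟩ := hpos
    have hfin : {k | g n ≤ g k}.Finite := by
      simpa only [eventually_cofinite, not_lt] using hlim.eventually_lt_const hn
    obtain ⟨q, ⟨hqs, hq⟩, hmax⟩ :=
      Set.exists_max_image (s ∩ {k | g n ≤ g k}) g (hfin.inter_of_right s) ⟨n, hns, le_rfl⟩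
    refine ⟨q, hqs, fun k hk => ?_⟩
    rcases le_total (g n) (g k) with hnk | hkn
    · exact hmax k ⟨hk, hnk⟩
    · exact hkn.trans hq
  · push Not at hpos
    obtain ⟨n, hn⟩ := hs
    exact ⟨n, hn, fun k hk => (hpos k hk).trans (ha n)⟩

theorem exists_notMem_forall_le_and_mem_or_subset [Infinite ι] (ha : ∀ i, a ≤ g i)
    (hlim : Tendsto g cofinite (𝓝 a)) {Γ : Finset ι} (hΓ : ∀ i ∈ Γ, ∀ j ∉ Γ, g j ≤ g i)
    (T : Finset ι) : ∃ n, n ∉ T ∧ (∀ k ∉ T, g k ≤ g n) ∧ (n ∈ Γ ∨ Γ ⊆ T) := by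
  classical
  by_cases hΓT : Γ ⊆ T
  · obtain ⟨n, hn, hmax⟩ :=
      exists_mem_forall_le_of_tendsto_cofinite ha hlim T.finite_toSet.infinite_compl.nonempty
    exact ⟨n, hn, hmax, .inr hΓT⟩
  · obtain ⟨n, hn, hmax⟩ := exists_max_image (Γ \ T) g (sdiff_nonempty.2 hΓT)
    rw [Finset.mem_sdiff] at hn
    refine ⟨n, hn.2, fun k hk => ?_, .inl hn.1⟩
    by_cases hkΓ : k ∈ Γ
    · exact hmax k (Finset.mem_sdiff.2 ⟨hkΓ, hk⟩)
    · exact hΓ n hn.1 k hkΓ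

theorem exists_antitone_rearrangement [Infinite ι] [DecidableEq ι] (ha : ∀ i, a ≤ g i)
    (hlim : Tendsto g cofinite (𝓝 a)) {Γ : Finset ι} (hΓ : ∀ i ∈ Γ, ∀ j ∉ Γ, g j ≤ g i) :
    ∃ ρ : ℕ → ι, Function.Injective ρ ∧ (∀ i, g i ≠ a → i ∈ Set.range ρ) ∧ Antitone (g ∘ ρ) ∧
      (range #Γ).image ρ = Γ := by
  obtain ⟨ρ, hρ⟩ := exists_seq_of_forall_finset_image_range
    (exists_notMem_forall_le_and_mem_or_subset ha hlim hΓ)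
  have hinj : Function.Injective ρ := .of_lt_imp_ne fun j k hjk heq =>
    (hρ k).1 (heq ▸ mem_image_of_mem ρ (mem_range.2 hjk))
  refine ⟨ρ, hinj, fun i hi => ?_, fun j k hjk => ?_, ?_⟩
  · by_contra hirange
    have hle : ∀ k, g i ≤ g (ρ k) := fun k => (hρ k).2.1 i fun himage =>
      hirange (Set.mem_range.2 ((mem_image.1 himage).imp fun _ => And.right))
    exact hi ((ge_of_tendsto' (hlim.comp hinj.tendsto_cofinite) hle).antisymm (ha i))
  · refine (hρ j).2.1 _ ?_
    rw [hinj.mem_finset_image, mem_range]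
    exact hjk.not_gt
  · refine eq_of_subset_of_card_le (fun i hi => ?_) ?_
    · obtain ⟨k, hk, rfl⟩ := mem_image.1 hi
      refine (hρ k).2.2.resolve_right fun hsub => (mem_range.1 hk).not_ge ?_
      simpa only [card_image_of_injective _ hinj, card_range] using card_le_card hsub
    · rw [card_image_of_injective _ hinj, card_range]

theorem exists_disjoint_card_eq_norm_sum_lt {ι E : Type*} [Infinite ι] [SeminormedAddCommGroup E]
    {u : ι → E} (hu : Tendsto u cofinite (𝓝 0)) (F : Finset ι) (k : ℕ) {ε : ℝ} (hε : 0 < ε) :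
    ∃ D : Finset ι, Disjoint D F ∧ #D = k ∧ ‖∑ i ∈ D, u i‖ < ε := by
  obtain ⟨δ, hδ, hkδ⟩ := exists_pos_mul_lt hε k
  have hfin : {i | ¬ ‖u i‖ < δ}.Finite :=
    eventually_cofinite.1 ((tendsto_zero_iff_norm_tendsto_zero.1 hu).eventually_lt_const hδ)
  obtain ⟨D, hD, hDcard⟩ := (hfin.union F.finite_toSet).infinite_compl.exists_subset_card_eq k
  have hsmall : ∀ i ∈ D, ‖u i‖ ≤ δ := fun i hi =>
    (not_not.1 fun hi' => hD hi (.inl hi')).le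
  refine ⟨D, disjoint_left.2 fun i hi hiF => hD hi (.inr hiF), hDcard, ?_⟩
  calc ‖∑ i ∈ D, u i‖ ≤ ∑ _i ∈ D, δ := norm_sum_le_of_le D hsmall
    _ = k * δ := by rw [sum_const, hDcard, nsmul_eq_mul]
    _ < ε := hkδ

theorem card_le_mul_card_sdiff_of_card_inter_le {ι : Type*} [DecidableEq ι] {A Γ : Finset ι}
    {lam : ℝ} {N : ℕ} (hA : #A ≤ #Γ) (hinter : (#(A ∩ Γ) : ℝ) ≤ lam * #Γ)
    (hN : 1 ≤ N * (1 - lam)) : #A ≤ N * #(Γ \ A) := by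
  have hsplit : (#(Γ \ A) : ℝ) + #(A ∩ Γ) = #Γ := by
    rw [inter_comm]
    exact_mod_cast card_sdiff_add_card_inter Γ A
  refine hA.trans ?_
  have : (#Γ : ℝ) ≤ N * #(Γ \ A) := by
    calc (#Γ : ℝ) ≤ N * (1 - lam) * #Γ := le_mul_of_one_le_left (by positivity) hN
      _ = N * (#Γ - lam * #Γ) := by ring
      _ ≤ N * #(Γ \ A) := by gcongr; linarith
  exact_mod_cast this

end

namespace BddMarkushevichBasis

open Filter Finset Topology

variable {X : Type*} [NormedAddCommGroup X] [NormedSpace ℝ X] {M : BddMarkushevichBasis X}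
  {x z : X} {Γ A B D : Finset ℕ} {c : ℕ → ℝ} {C lam : ℝ}

attribute [simp] biorth

section Coordinates

variable (M)

@[simp]
theorem f_P (n : ℕ) (A : Finset ℕ) (x : X) :
    M.f n (M.P A x) = if n ∈ A then M.f n x else 0 := by
  simp [P]

@[simp]
theorem P_empty (x : X) : M.P ∅ x = 0 :=
  sum_empty

theorem P_union (A B : Finset ℕ) (x : X) : M.P (A ∪ B) x = M.P A x + M.P (B \ A) x := by
  rw [P, ← union_sdiff_self_eq_union, sum_union disjoint_sdiff]
  rfl

variable {M} in
theorem sub_P_congr (h : ∀ n ∉ A, M.f n x = M.f n z) : x - M.P A x = z - M.P A z := by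
  refine M.separating _ _ fun n => ?_
  by_cases hn : n ∈ A
  · simp [hn]
  · simp [hn, h n hn]

theorem tendsto_f_cofinite (x : X) : Tendsto (fun n => M.f n x) cofinite (𝓝 0) := by
  have hspan : ∀ y ∈ Submodule.span ℝ (Set.range M.e),
      Tendsto (fun n => M.f n y) cofinite (𝓝 0) := by
    intro y hy
    induction hy using Submodule.span_induction with
    | mem y hy =>
      obtain ⟨k, rfl⟩ := hy
      refine tendsto_const_nhds.congr' ?_
      filter_upwards [(Set.finite_singleton k).compl_mem_cofinite] with n hn
      rw [M.biorth, if_neg (by simpa using hn)]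
    | zero => simp
    | add y z _ _ hy hz => simpa using hy.add hz
    | smul c y _ hy => simpa using hy.const_mul c
  have hbdd : ∃ C, ∀ n, ‖M.f n‖ ≤ C := ⟨M.b, fun n => (M.f_bounds n).2.le⟩
  have hequi : Equicontinuous ((↑) ∘ M.f) := ((NormedSpace.equicontinuous_TFAE M.f).out 5 1).1 hbdd
  exact (hequi x).tendsto_of_mem_closure tendsto_const_nhds hspan (M.dense_span x)

theorem tendsto_f_smul_e_cofinite (x : X) :
    Tendsto (fun n => M.f n x • M.e n) cofinite (𝓝 0) :=
  (M.tendsto_f_cofinite x).zero_smul_isBoundedUnder_le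
    (isBoundedUnder_of ⟨M.b, fun n => (M.e_bounds n).2.le⟩)

end Coordinates

section GreedySets

theorem card_Lam {ρ : ℕ → ℕ} (hρ : Function.Injective ρ) (m : ℕ) : #(Lam ρ m) = m := by
  rw [Lam, card_image_of_injective _ hρ, card_range]

theorem G_eq_P_Lam {ρ : ℕ → ℕ} (hρ : Function.Injective ρ) (x : X) (m : ℕ) :
    M.G x ρ m = M.P (Lam ρ m) x := by
  rw [G, P, Lam, sum_image hρ.injOn]

/-- `Γ` is a greedy set of `x`: the coordinates of `x` on `Γ` dominate those off `Γ` in absolute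
value. By `isGreedySet_iff_exists_isGreedyOrdering` these are the sets `Λ_m(x)`, which allows one
to speak of `G_m(x) = P Γ x` without choosing an ordering. -/
def IsGreedySet (M : BddMarkushevichBasis X) (x : X) (Γ : Finset ℕ) : Prop :=
  ∀ i ∈ Γ, ∀ j ∉ Γ, |M.f j x| ≤ |M.f i x|

theorem IsGreedyOrdering.isGreedySet_Lam {ρ : ℕ → ℕ} (h : M.IsGreedyOrdering x ρ) (m : ℕ) :
    M.IsGreedySet x (Lam ρ m) := by
  obtain ⟨-, hsupp, hanti⟩ := h
  intro i hi j hj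
  obtain ⟨k, hk, rfl⟩ := mem_image.1 hi
  by_cases hj0 : M.f j x = 0
  · simp [hj0]
  · obtain ⟨l, rfl⟩ := hsupp j hj0
    have hml : m ≤ l := by
      by_contra! hlm
      exact hj (mem_image_of_mem ρ (mem_range.2 hlm))
    exact hanti k l ((mem_range.1 hk).le.trans hml)

theorem isGreedySet_iff_exists_isGreedyOrdering :
    M.IsGreedySet x Γ ↔ ∃ ρ, M.IsGreedyOrdering x ρ ∧ Lam ρ #Γ = Γ := by
  constructor
  · intro h
    have hlim : Tendsto (fun n => |M.f n x|) cofinite (𝓝 0) := by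
      simpa using (M.tendsto_f_cofinite x).abs
    obtain ⟨ρ, hinj, hsupp, hanti, hρΓ⟩ :=
      exists_antitone_rearrangement (fun n => abs_nonneg (M.f n x)) hlim h
    exact ⟨ρ, ⟨hinj, fun n hn => hsupp n (abs_ne_zero.2 hn), fun _ _ hjk => hanti hjk⟩, hρΓ⟩
  · rintro ⟨ρ, hρ, hρΓ⟩
    exact hρΓ ▸ hρ.isGreedySet_Lam #Γ

theorem forall_isGreedyOrdering_iff {p : ℕ → Finset ℕ → X → Prop} :
    (∀ ρ m, M.IsGreedyOrdering x ρ → p m (Lam ρ m) (M.G x ρ m)) ↔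
      ∀ Γ, M.IsGreedySet x Γ → p #Γ Γ (M.P Γ x) := by
  constructor
  · intro h Γ hΓ
    obtain ⟨ρ, hρ, hρΓ⟩ := isGreedySet_iff_exists_isGreedyOrdering.1 hΓ
    simpa only [G_eq_P_Lam hρ.1, hρΓ] using h ρ #Γ hρ
  · intro h ρ m hρ
    simpa only [G_eq_P_Lam hρ.1, card_Lam hρ.1] using h _ (hρ.isGreedySet_Lam m)

theorem IsGreedySet.sub_P (h : M.IsGreedySet x Γ) (D : Finset ℕ) :
    M.IsGreedySet (x - M.P D x) (Γ \ D) := by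
  intro i hi j hj
  rw [Finset.mem_sdiff] at hi hj
  by_cases hjD : j ∈ D
  · simp [hjD]
  · simpa [hi.2, hjD] using h i hi.1 j fun hjΓ => hj ⟨hjΓ, hjD⟩

theorem IsGreedySet.add_sum_smul_e (h : M.IsGreedySet z Γ) (hBΓ : Disjoint B Γ)
    (hz : ∀ i ∈ B, M.f i z = 0) (hc : ∀ i ∈ B, ∀ j ∈ Γ, |c i| ≤ |M.f j z|) :
    M.IsGreedySet (z + ∑ i ∈ B, c i • M.e i) Γ := by
  intro i hi j hj
  have hiB : i ∉ B := disjoint_right.1 hBΓ hi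
  by_cases hjB : j ∈ B
  · simpa [hiB, hjB, hz j hjB] using hc j hjB i hi
  · simpa [hiB, hjB] using h i hi j hj

theorem IsGreedySet.exists_isGreedySet_of_eq_off (h : M.IsGreedySet x Γ)
    (hxz : ∀ n ∉ A, M.f n x = M.f n z) :
    ∃ H, M.IsGreedySet z H ∧ H \ A = Γ \ A ∧ ∀ i ∉ Γ, ∀ j ∈ H, |M.f i x| ≤ |M.f j z| := by
  set H := (Γ \ A) ∪ {i ∈ A | ∃ q ∈ Γ, |M.f q x| < |M.f i z|} with hH
  have hmem : ∀ i ∈ H, ∃ q ∈ Γ, |M.f q x| ≤ |M.f i z| := by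
    intro i hi
    rcases mem_union.1 hi with hi | hi
    · obtain ⟨hiΓ, hiA⟩ := Finset.mem_sdiff.1 hi
      exact ⟨i, hiΓ, by rw [hxz i hiA]⟩
    · obtain ⟨-, q, hq, hqi⟩ := mem_filter.1 hi
      exact ⟨q, hq, hqi.le⟩
  have hnotMem : ∀ j ∉ H, ∀ q ∈ Γ, |M.f j z| ≤ |M.f q x| := by
    intro j hj q hq
    simp only [hH, mem_union, mem_filter, not_or, not_and, not_exists, not_lt] at hj
    by_cases hjA : j ∈ A
    · exact hj.2 hjA q hq
    · rw [← hxz j hjA]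
      exact h q hq j fun hjΓ => hj.1 (Finset.mem_sdiff.2 ⟨hjΓ, hjA⟩)
  refine ⟨H, fun i hi j hj => ?_, ?_, fun i hi j hj => ?_⟩
  · obtain ⟨q, hq, hqi⟩ := hmem i hi
    exact (hnotMem j hj q hq).trans hqi
  · ext n
    by_cases hn : n ∈ A <;> simp [hH, hn]
  · obtain ⟨q, hq, hqj⟩ := hmem j hj
    exact (h q hq i hi).trans hqj

end GreedySets

/-- The almost greedy inequality with constant `C`, stated for greedy sets instead of greedy
orderings. -/
def AlmostGreedyWith (M : BddMarkushevichBasis X) (C : ℝ) : Prop :=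
  ∀ (x : X) (Γ A : Finset ℕ), M.IsGreedySet x Γ → #A ≤ #Γ → ‖x - M.P Γ x‖ ≤ C * ‖x - M.P A x‖

theorem almostGreedy_iff_exists_almostGreedyWith :
    M.AlmostGreedy ↔ ∃ C, M.AlmostGreedyWith C := by
  refine exists_congr fun C => forall_congr' fun x => ?_
  have key := forall_isGreedyOrdering_iff (M := M) (x := x)
    (p := fun m _ y => ∀ A : Finset ℕ, #A ≤ m → ‖x - y‖ ≤ C * ‖x - M.P A x‖)
  exact ⟨fun h Γ A hΓ => key.1 (fun ρ m hρ A => h ρ m A hρ) Γ hΓ A,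
    fun h ρ m A hρ => key.2 (fun Γ hΓ A => h Γ A hΓ) ρ m hρ A⟩

/-- The greedy sets of a vector approximate it, up to the factor `C`, as well as every linear
combination of at most as many basis vectors whose index set meets the greedy set in at most a
proportion `lam` of its elements. -/
def OverlapGreedyWith (M : BddMarkushevichBasis X) (lam C : ℝ) : Prop :=
  ∀ (x : X) (Γ A : Finset ℕ) (a : ℕ → ℝ), M.IsGreedySet x Γ → #A ≤ #Γ →
    (#(A ∩ Γ) : ℝ) ≤ lam * #Γ → ‖x - M.P Γ x‖ ≤ C * ‖x - ∑ i ∈ A, a i • M.e i‖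

theorem overlapGreedyWith_iff_forall_isGreedyOrdering :
    M.OverlapGreedyWith lam C ↔
      ∀ (x : X) (ρ : ℕ → ℕ) (m : ℕ) (A : Finset ℕ) (a : ℕ → ℝ),
        M.IsGreedyOrdering x ρ → #A ≤ m → (#(A ∩ Lam ρ m) : ℝ) ≤ lam * m →
        ‖x - M.G x ρ m‖ ≤ C * ‖x - ∑ i ∈ A, a i • M.e i‖ := by
  refine forall_congr' fun x => ?_
  have key := forall_isGreedyOrdering_iff (M := M) (x := x)
    (p := fun m Γ y => ∀ (A : Finset ℕ) (a : ℕ → ℝ), #A ≤ m → (#(A ∩ Γ) : ℝ) ≤ lam * m →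
      ‖x - y‖ ≤ C * ‖x - ∑ i ∈ A, a i • M.e i‖)
  exact ⟨fun h ρ m A a hρ => key.2 (fun Γ hΓ A a => h Γ A a hΓ) ρ m hρ A a,
    fun h Γ A a hΓ => key.1 (fun ρ m hρ A a => h ρ m A a hρ) Γ hΓ A a⟩

namespace AlmostGreedyWith

theorem norm_sub_P_le (hM : M.AlmostGreedyWith C) (hΓ : M.IsGreedySet x Γ) :
    ‖x - M.P Γ x‖ ≤ C * ‖x‖ := by
  simpa using hM x Γ ∅ hΓ (by simp)

theorem one_le (hM : M.AlmostGreedyWith C) : 1 ≤ C := by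
  have hpos : 0 < ‖M.e 0‖ := M.ha.trans (M.e_bounds 0).1
  have hempty : M.IsGreedySet (M.e 0) ∅ := by simp [IsGreedySet]
  exact (le_mul_iff_one_le_left hpos).1 (by simpa using hM.norm_sub_P_le hempty)

theorem norm_sub_P_add_sum_le (hM : M.AlmostGreedyWith C) (hΓ : M.IsGreedySet z Γ)
    (hBΓ : Disjoint B Γ) (hcard : #B ≤ #Γ) (hz : ∀ i ∈ B, M.f i z = 0)
    (hc : ∀ i ∈ B, ∀ j ∈ Γ, |c i| ≤ |M.f j z|) :
    ‖z - M.P Γ z + ∑ i ∈ B, c i • M.e i‖ ≤ C * ‖z‖ := by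
  set y := z + ∑ i ∈ B, c i • M.e i with hy
  have hyΓ : y - M.P Γ y = z - M.P Γ z + ∑ i ∈ B, c i • M.e i := by
    refine M.separating _ _ fun n => ?_
    by_cases hn : n ∈ Γ
    · simp [hy, hn, disjoint_right.1 hBΓ hn]
    · simp [hy, hn]
  have hyB : y - M.P B y = z := by
    refine M.separating _ _ fun n => ?_
    by_cases hn : n ∈ B
    · simp [hn, hz n hn]
    · simp [hy, hn]
  simpa only [hyΓ, hyB] using hM y Γ B (hΓ.add_sum_smul_e hBΓ hz hc) hcard

theorem norm_sum_le_norm_sum (hM : M.AlmostGreedyWith C) {d : ℕ → ℝ} (hBD : Disjoint B D)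
    (hcard : #B ≤ #D) (hcd : ∀ i ∈ B, ∀ j ∈ D, |c i| ≤ |d j|) :
    ‖∑ i ∈ B, c i • M.e i‖ ≤ C * ‖∑ i ∈ D, d i • M.e i‖ := by
  set w := ∑ i ∈ D, d i • M.e i with hw
  have hfw : ∀ j ∈ D, M.f j w = d j := fun j hj => by simp [hw, hj]
  have hgreedy : M.IsGreedySet w D := fun i _ j hj => by simp [hw, hj]
  have hwD : w - M.P D w = 0 := M.separating _ _ fun n => by by_cases hn : n ∈ D <;> simp [hw, hn]
  have hwB : ∀ i ∈ B, M.f i w = 0 := fun i hi => by simp [hw, disjoint_left.1 hBD hi]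
  simpa only [hwD, zero_add] using hM.norm_sub_P_add_sum_le hgreedy hBD hcard hwB
    fun i hi j hj => (hcd i hi j hj).trans_eq (by rw [hfw j hj])

theorem norm_sum_le_of_f_eq_zero (hM : M.AlmostGreedyWith C) (hΓ : M.IsGreedySet z Γ)
    (hBΓ : Disjoint B Γ) (hcard : #B ≤ #Γ) (hz : ∀ i ∈ B, M.f i z = 0)
    (hc : ∀ i ∈ B, ∀ j ∈ Γ, |c i| ≤ |M.f j z|) :
    ‖∑ i ∈ B, c i • M.e i‖ ≤ 2 * C * ‖z‖ := by
  calc ‖∑ i ∈ B, c i • M.e i‖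
      = ‖(z - M.P Γ z + ∑ i ∈ B, c i • M.e i) - (z - M.P Γ z)‖ := by rw [add_sub_cancel_left]
    _ ≤ C * ‖z‖ + C * ‖z‖ := norm_sub_le_of_le
        (hM.norm_sub_P_add_sum_le hΓ hBΓ hcard hz hc) (hM.norm_sub_P_le hΓ)
    _ = 2 * C * ‖z‖ := by ring

theorem norm_sum_le_of_card_le (hM : M.AlmostGreedyWith C) (hΓ : M.IsGreedySet z Γ)
    (hcard : #B ≤ #Γ) (hc : ∀ i ∈ B, ∀ j ∈ Γ, |c i| ≤ |M.f j z|) :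
    ‖∑ i ∈ B, c i • M.e i‖ ≤ 2 * C ^ 2 * ‖z‖ := by
  have hC : 0 ≤ C := zero_le_one.trans hM.one_le
  rcases Γ.eq_empty_or_nonempty with rfl | hne
  · obtain rfl : B = ∅ := by simpa using hcard
    simpa using by positivity
  obtain ⟨q, hq, hmin⟩ := Γ.exists_min_image (fun i => |M.f i z|) hne
  refine le_of_forall_pos_le_add fun ε hε => ?_
  obtain ⟨δ, hδ, hδε⟩ := exists_pos_mul_lt hε (2 * C ^ 2)
  obtain ⟨D, hD, hDcard, hDz⟩ :=
    exists_disjoint_card_eq_norm_sum_lt (M.tendsto_f_smul_e_cofinite z) (Γ ∪ B) #Γ hδ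
  obtain ⟨hDΓ, hDB⟩ := disjoint_union_right.1 hD
  have hgreedy : M.IsGreedySet (z - M.P D z) Γ := by
    simpa only [sdiff_eq_self_of_disjoint hDΓ.symm] using hΓ.sub_P D
  calc ‖∑ i ∈ B, c i • M.e i‖
      ≤ C * ‖∑ i ∈ D, M.f q z • M.e i‖ :=
        hM.norm_sum_le_norm_sum hDB.symm (hcard.trans_eq hDcard.symm) fun i hi _ _ => hc i hi q hq
    _ ≤ C * (2 * C * ‖z - M.P D z‖) := by
        gcongr
        refine hM.norm_sum_le_of_f_eq_zero hgreedy hDΓ hDcard.le (fun i hi => by simp [hi])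
          fun i _ j hj => ?_
        simpa [disjoint_right.1 hDΓ hj] using hmin j hj
    _ ≤ C * (2 * C * (‖z‖ + δ)) := by
        gcongr
        exact norm_sub_le_of_le le_rfl hDz.le
    _ = 2 * C ^ 2 * ‖z‖ + 2 * C ^ 2 * δ := by ring
    _ ≤ 2 * C ^ 2 * ‖z‖ + ε := by gcongr

theorem norm_sum_le_of_card_le_mul (hM : M.AlmostGreedyWith C) (hΓ : M.IsGreedySet z Γ) {N : ℕ}
    (hcard : #B ≤ N * #Γ) (hc : ∀ i ∈ B, ∀ j ∈ Γ, |c i| ≤ |M.f j z|) :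
    ‖∑ i ∈ B, c i • M.e i‖ ≤ N * (2 * C ^ 2 * ‖z‖) := by
  induction N generalizing B with
  | zero =>
    obtain rfl : B = ∅ := by simpa using hcard
    simp
  | succ N ih =>
    obtain ⟨T, hTB, hT⟩ := exists_subset_card_eq (min_le_left #B #Γ)
    have hrest : #(B \ T) ≤ N * #Γ := by
      rw [card_sdiff_of_subset hTB, hT]
      rw [add_mul, one_mul] at hcard
      omega
    calc ‖∑ i ∈ B, c i • M.e i‖
        = ‖∑ i ∈ B \ T, c i • M.e i + ∑ i ∈ T, c i • M.e i‖ := by rw [sum_sdiff hTB]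
      _ ≤ N * (2 * C ^ 2 * ‖z‖) + 2 * C ^ 2 * ‖z‖ := norm_add_le_of_le
          (ih hrest fun i hi => hc i (sdiff_subset hi))
          (hM.norm_sum_le_of_card_le hΓ (hT.trans_le (min_le_right _ _)) fun i hi => hc i (hTB hi))
      _ = (N + 1 : ℕ) * (2 * C ^ 2 * ‖z‖) := by push_cast; ring

theorem norm_sub_P_le_of_eq_off (hM : M.AlmostGreedyWith C) (hΓ : M.IsGreedySet x Γ) {N : ℕ}
    (hcard : #A ≤ N * #(Γ \ A)) (hxz : ∀ n ∉ A, M.f n x = M.f n z) :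
    ‖x - M.P Γ x‖ ≤ (C + 4 * N * C ^ 2) * ‖z‖ := by
  obtain ⟨H, hH, hHA, hxH⟩ := hΓ.exists_isGreedySet_of_eq_off hxz
  have hAH : #A ≤ N * #H :=
    hcard.trans (Nat.mul_le_mul_left N (card_le_card (hHA ▸ sdiff_subset)))
  have hunion : H ∪ A = Γ ∪ A := by rw [← sdiff_union_self_eq_union, hHA, sdiff_union_self_eq_union]
  have hagree : x - M.P (Γ ∪ A) x = z - M.P (H ∪ A) z := by
    rw [hunion]
    exact sub_P_congr fun n hn => hxz n fun hnA => hn (mem_union_right Γ hnA)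
  have hsplit : x - M.P Γ x = z - M.P H z + M.P (A \ Γ) x - M.P (A \ H) z := by
    rw [P_union, P_union, ← sub_sub, ← sub_sub, sub_eq_iff_eq_add] at hagree
    rw [hagree, sub_add_eq_add_sub]
  have hxA : ‖M.P (A \ Γ) x‖ ≤ N * (2 * C ^ 2 * ‖z‖) :=
    hM.norm_sum_le_of_card_le_mul hH ((card_le_card sdiff_subset).trans hAH)
      fun i hi j hj => hxH i (Finset.mem_sdiff.1 hi).2 j hj
  have hzA : ‖M.P (A \ H) z‖ ≤ N * (2 * C ^ 2 * ‖z‖) :=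
    hM.norm_sum_le_of_card_le_mul hH ((card_le_card sdiff_subset).trans hAH)
      fun i hi j hj => hH j hj i (Finset.mem_sdiff.1 hi).2
  calc ‖x - M.P Γ x‖ = ‖z - M.P H z + M.P (A \ Γ) x - M.P (A \ H) z‖ := by rw [hsplit]
    _ ≤ C * ‖z‖ + N * (2 * C ^ 2 * ‖z‖) + N * (2 * C ^ 2 * ‖z‖) :=
        norm_sub_le_of_le (norm_add_le_of_le (hM.norm_sub_P_le hH) hxA) hzA
    _ = (C + 4 * N * C ^ 2) * ‖z‖ := by ring

theorem exists_overlapGreedyWith (hM : M.AlmostGreedyWith C) (hlam : lam < 1) :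
    ∃ C', M.OverlapGreedyWith lam C' := by
  obtain ⟨N, hN⟩ := exists_nat_ge (1 / (1 - lam))
  rw [div_le_iff₀ (sub_pos.2 hlam)] at hN
  refine ⟨C + 4 * N * C ^ 2, fun x Γ A a hΓ hA hinter => ?_⟩
  exact hM.norm_sub_P_le_of_eq_off hΓ (card_le_mul_card_sdiff_of_card_inter_le hA hinter hN)
    fun n hn => by simp [hn]

end AlmostGreedyWith

theorem OverlapGreedyWith.almostGreedyWith (h : M.OverlapGreedyWith 0 C) :
    M.AlmostGreedyWith C := by
  intro x Γ A hΓ hA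
  set y := x - M.P (A ∩ Γ) x with hy
  have hgreedy : M.IsGreedySet y (Γ \ A) := by
    simpa only [sdiff_inter_self_right] using hΓ.sub_P (A ∩ Γ)
  have hoverlap : (#((A \ Γ) ∩ (Γ \ A)) : ℝ) ≤ 0 * #(Γ \ A) := by
    have hdisj : Disjoint (A \ Γ) (Γ \ A) := disjoint_sdiff_sdiff
    simp [disjoint_iff_inter_eq_empty.1 hdisj]
  have hyΓ : y - M.P (Γ \ A) y = x - M.P Γ x := by
    refine M.separating _ _ fun n => ?_
    by_cases hnA : n ∈ A <;> by_cases hnΓ : n ∈ Γ <;> simp [hy, hnA, hnΓ]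
  have hyA : y - ∑ i ∈ A \ Γ, M.f i x • M.e i = x - M.P A x := by
    refine M.separating _ _ fun n => ?_
    by_cases hnA : n ∈ A <;> by_cases hnΓ : n ∈ Γ <;> simp [hy, hnA, hnΓ]
  simpa only [hyΓ, hyA] using
    h y (Γ \ A) (A \ Γ) (fun i => M.f i x) hgreedy (card_sdiff_le_card_sdiff_iff.2 hA) hoverlap

end BddMarkushevichBasis

theorem stmt_8_general {X : Type*} [NormedAddCommGroup X] [NormedSpace ℝ X]
    (M : BddMarkushevichBasis X) :
    M.AlmostGreedy ↔
      ∀ lam : ℝ, 0 ≤ lam → lam < 1 →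
        ∃ C : ℝ, ∀ (x : X) (ρ : ℕ → ℕ) (m : ℕ) (A : Finset ℕ) (a : ℕ → ℝ),
          M.IsGreedyOrdering x ρ → A.card ≤ m →
          ((A ∩ Lam ρ m).card : ℝ) ≤ lam * m →
          ‖x - M.G x ρ m‖ ≤ C * ‖x - ∑ i ∈ A, a i • M.e i‖ := by
  simp only [← overlapGreedyWith_iff_forall_isGreedyOrdering,
    almostGreedy_iff_exists_almostGreedyWith]
  constructor
  · rintro ⟨C, hC⟩ lam - hlam
    exact hC.exists_overlapGreedyWith hlam
  · intro h
    obtain ⟨C, hC⟩ := h 0 le_rfl one_pos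
    exact ⟨C, hC.almostGreedyWith⟩

/-- A bounded Markushevich basis of a real Banach space is almost greedy
if and only if for every `0 ≤ λ < 1` there is a constant `C` such that
`‖x - G_m(x)‖ ≤ C ‖x - ∑_{i ∈ A} a_i e_i‖` for every `x`, every `m`, every greedy
ordering for `x`, every finite `A` with `|A| ≤ m` and `|A ∩ Λ_m(x)| ≤ λ m`, and all real
scalars `(a_i)`. -/
theorem stmt_8 {X : Type*} [NormedAddCommGroup X] [NormedSpace ℝ X] [CompleteSpace X]
    (M : BddMarkushevichBasis X) :
    M.AlmostGreedy ↔
      ∀ lam : ℝ, 0 ≤ lam → lam < 1 →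
        ∃ C : ℝ, ∀ (x : X) (ρ : ℕ → ℕ) (m : ℕ) (A : Finset ℕ) (a : ℕ → ℝ),
          M.IsGreedyOrdering x ρ → A.card ≤ m →
          ((A ∩ Lam ρ m).card : ℝ) ≤ lam * m →
          ‖x - M.G x ρ m‖ ≤ C * ‖x - ∑ i ∈ A, a i • M.e i‖ := by
  exact stmt_8_general M
end

section
/- Let X be a real Banach space with a Schauder basis (e_n). Then (e_n) satisfies ‖x − G_m(x)‖ ≤ σ̃^R_m(x) for all x ∈ X, all m ∈ ℕ, and every greedy ordering (i.e., it is 1-reverse partially greedy in the σ̃^R sense) if and only if for every x ∈ X, every greedy ordering for x, and every j > β_1(x), one has ‖x − G_1(x)‖ ≤ min(‖x‖, ‖x − e_j^*(x)e_j‖). -/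
open Filter Topology

open SchauderBasisSys

/-!
By induction on `m`, it suffices to remove the largest coordinate `x_l` of `x` while discarding one
index `a > l` from the competing set `A`. If `A` is empty this is the hypothesis. Otherwise put
`w = x - P_A x - x_l e_l`. Since all coordinates of `w` and `x_a` are bounded by `|x_l|`, the
hypothesis for `w + x_l e_l ± x_l e_a` bounds `‖w ± x_l e_a‖` by `‖w + x_l e_l‖`, and convexity of
the norm gives `‖w + x_a e_a‖ ≤ ‖w + x_l e_l‖ = ‖x - P_A x‖`.

The hypothesis only speaks about vectors that admit a greedy ordering. Finitely supported vectors
do, with any prescribed largest coordinate in first place, and the partial sums of the basis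
expansion carry the inequality over to every vector with a largest coordinate.
-/

theorem norm_add_smul_le_max {E : Type*} [SeminormedAddCommGroup E] [NormedSpace ℝ E] (w v : E)
    {r s : ℝ} (hrs : |r| ≤ |s|) : ‖w + r • v‖ ≤ max ‖w + s • v‖ ‖w - s • v‖ := by
  have hconvex : ConvexOn ℝ Set.univ fun c : ℝ => ‖w + c • v‖ := by
    simpa [Function.comp_def, AffineMap.lineMap_apply, add_comm] using
      convexOn_univ_norm.comp_affineMap (AffineMap.lineMap w (w + v) : ℝ →ᵃ[ℝ] E)
  have hmax := hconvex.le_max_of_mem_Icc (Set.mem_univ _) (Set.mem_univ _) (abs_le.mp hrs)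
  rcases abs_choice s with hs | hs
  · simpa [hs, sub_eq_add_neg, max_comm] using hmax
  · simpa [hs, sub_eq_add_neg] using hmax

section Sorting

variable {α : Type*} [LinearOrder α] {g : ℕ → α}

theorem exists_perm_antitone_comp_s12 {N : ℕ} (hg : ∀ n ≥ N, ∀ k, g n ≤ g k) :
    ∃ σ : Equiv.Perm ℕ, Antitone (g ∘ σ) := by
  let τ : Equiv.Perm (Fin N) := Tuple.sort fun i => OrderDual.toDual (g i)
  have hτ : Antitone fun i => g (τ i) := Tuple.monotone_sort fun i => OrderDual.toDual (g i)
  let σ : Equiv.Perm ℕ := τ.extendDomain Fin.equivSubtype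
  have hσ_lt {k : ℕ} (hk : k < N) : σ k = τ ⟨k, hk⟩ :=
    τ.extendDomain_apply_image Fin.equivSubtype ⟨k, hk⟩
  have hσ_ge {k : ℕ} (hk : N ≤ k) : σ k = k :=
    τ.extendDomain_apply_not_subtype Fin.equivSubtype hk.not_gt
  refine ⟨σ, fun j k hjk => ?_⟩
  rcases lt_or_ge k N with hk | hk
  · simpa only [Function.comp_apply, hσ_lt hk, hσ_lt (hjk.trans_lt hk)] using
      hτ (show (⟨j, hjk.trans_lt hk⟩ : Fin N) ≤ ⟨k, hk⟩ from hjk)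
  · simpa only [Function.comp_apply, hσ_ge hk] using hg k hk (σ j)

theorem exists_perm_antitone_comp_apply_zero_eq {N l : ℕ} (hg : ∀ n ≥ N, ∀ k, g n ≤ g k)
    (hl : ∀ n, g n ≤ g l) : ∃ σ : Equiv.Perm ℕ, Antitone (g ∘ σ) ∧ σ 0 = l := by
  obtain ⟨σ, hσ⟩ := exists_perm_antitone_comp_s12 hg
  have hmax : g (σ 0) = g l :=
    (hl _).antisymm (by simpa using hσ (Nat.zero_le (σ.symm l)))
  refine ⟨σ.trans (Equiv.swap (σ 0) l), ?_, by simp⟩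
  simpa only [Antitone, Function.comp_apply, Equiv.trans_apply, Equiv.apply_swap_eq_self hmax]
    using hσ

end Sorting

namespace SchauderBasisSys

variable {X : Type*} [NormedAddCommGroup X] [NormedSpace ℝ X] {S : SchauderBasisSys X} {x : X}

section Coordinates

theorem f_smul_e (n i : ℕ) (c : ℝ) : S.f n (c • S.e i) = if n = i then c else 0 := by
  simp [S.biorth]

theorem f_P (n : ℕ) (A : Finset ℕ) (x : X) :
    S.f n (S.P A x) = if n ∈ A then S.f n x else 0 := by
  simp [P, S.biorth]

theorem P_insert {a : ℕ} {A : Finset ℕ} (ha : a ∉ A) (x : X) :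
    S.P (insert a A) x = S.f a x • S.e a + S.P A x :=
  Finset.sum_insert ha

theorem P_sub_smul_e_of_notMem {a : ℕ} {A : Finset ℕ} (ha : a ∉ A) (x : X) (c : ℝ) :
    S.P A (x - c • S.e a) = S.P A x := by
  refine Finset.sum_congr rfl fun i hi => ?_
  rw [map_sub, f_smul_e, if_neg (ne_of_mem_of_not_mem hi ha), sub_zero]

end Coordinates

section GreedyOrdering

theorem IsGreedyOrdering.abs_le_apply_zero {ρ : ℕ → ℕ} (hρ : S.IsGreedyOrdering x ρ) (n : ℕ) :
    |S.f n x| ≤ |S.f (ρ 0) x| := by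
  obtain ⟨-, hsupp, hanti⟩ := hρ
  rcases eq_or_ne (S.f n x) 0 with hn | hn
  · simp [hn]
  · obtain ⟨k, rfl⟩ := hsupp n hn
    exact hanti 0 k k.zero_le

theorem IsGreedyOrdering.tail {ρ : ℕ → ℕ} (hρ : S.IsGreedyOrdering x ρ) :
    S.IsGreedyOrdering (x - S.f (ρ 0) x • S.e (ρ 0)) fun k => ρ (k + 1) := by
  obtain ⟨hinj, hsupp, hanti⟩ := hρ
  refine ⟨hinj.comp (add_left_injective 1), fun n hn => ?_, fun j k hjk => ?_⟩
  · rcases eq_or_ne n (ρ 0) with rfl | hn0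
    · simp [S.biorth] at hn
    · obtain ⟨_ | k, rfl⟩ := hsupp n (by simpa [S.biorth, hn0] using hn)
      · exact absurd rfl hn0
      · exact ⟨k, rfl⟩
  · simpa [S.biorth, hinj.eq_iff] using hanti (j + 1) (k + 1) (by lia)

theorem G_succ {ρ : ℕ → ℕ} (hρ : Function.Injective ρ) (x : X) (m : ℕ) :
    S.G x ρ (m + 1) = S.f (ρ 0) x • S.e (ρ 0) +
      S.G (x - S.f (ρ 0) x • S.e (ρ 0)) (fun k => ρ (k + 1)) m := by
  simp [G, Finset.sum_range_succ', S.biorth, hρ.eq_iff, add_comm]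

theorem exists_isGreedyOrdering_apply_zero_eq {N l : ℕ} (hN : ∀ n ≥ N, S.f n x = 0)
    (hl : ∀ n, |S.f n x| ≤ |S.f l x|) : ∃ ρ, S.IsGreedyOrdering x ρ ∧ ρ 0 = l := by
  obtain ⟨σ, hσ, hσ0⟩ := exists_perm_antitone_comp_apply_zero_eq
    (g := fun n => |S.f n x|) (N := N) (fun n hn k => by simp [hN n hn]) hl
  exact ⟨σ, ⟨σ.injective, fun n _ => σ.surjective n, hσ⟩, hσ0⟩

end GreedyOrdering

/-- Removing a largest coordinate, at index `l`, does not increase the norm and is at least as good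
as removing any coordinate to the right of `l`. This is the one-step greedy condition without
reference to greedy orderings, so that it applies to every vector whose coordinates attain their
maximum in absolute value. -/
def LargestCoordRemoval (S : SchauderBasisSys X) : Prop :=
  ∀ (x : X) (l a : ℕ), (∀ n, |S.f n x| ≤ |S.f l x|) → l < a →
    ‖x - S.f l x • S.e l‖ ≤ min ‖x‖ ‖x - S.f a x • S.e a‖

theorem largestCoordRemoval_of_norm_sub_G_one_le
    (h : ∀ (x : X) (ρ : ℕ → ℕ), S.IsGreedyOrdering x ρ → ∀ j : ℕ, ρ 0 < j →
      ‖x - S.G x ρ 1‖ ≤ min ‖x‖ ‖x - S.f j x • S.e j‖) :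
    S.LargestCoordRemoval := by
  intro x l a hl hla
  have hlim : Tendsto (fun N => S.P (Finset.range N) x) atTop (𝓝 x) := S.expansion x
  have hlim_sub (i : ℕ) : Tendsto (fun N => ‖S.P (Finset.range N) x -
      S.f i (S.P (Finset.range N) x) • S.e i‖) atTop (𝓝 ‖x - S.f i x • S.e i‖) :=
    (hlim.sub ((((S.f i).continuous.tendsto x).comp hlim).smul_const (S.e i))).norm
  refine le_of_tendsto_of_tendsto (hlim_sub l) (hlim.norm.min (hlim_sub a)) ?_
  filter_upwards [eventually_gt_atTop l] with N hlN
  have hmax (n : ℕ) : |S.f n (S.P (Finset.range N) x)| ≤ |S.f l (S.P (Finset.range N) x)| := by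
    rw [f_P, f_P, if_pos (Finset.mem_range.mpr hlN)]
    split_ifs
    · exact hl n
    · simp
  obtain ⟨ρ, hρ, rfl⟩ := exists_isGreedyOrdering_apply_zero_eq (N := N)
    (fun n hn => by simp [f_P, hn.not_gt]) hmax
  simpa [G] using h _ ρ hρ a hla

namespace LargestCoordRemoval

theorem norm_add_smul_e_le_of_abs_eq (h : S.LargestCoordRemoval) {w : X} {l a : ℕ} (hla : l < a)
    (hwl : S.f l w = 0) (hwa : S.f a w = 0) {s t : ℝ} (hs : ∀ n, |S.f n w| ≤ |s|)
    (hts : |t| = |s|) : ‖w + t • S.e a‖ ≤ ‖w + s • S.e l‖ := by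
  set z := w + t • S.e a + s • S.e l with hz
  have hzl : S.f l z = s := by simp [hz, S.biorth, hwl, hla.ne]
  have hza : S.f a z = t := by simp [hz, S.biorth, hwa, hla.ne']
  have hmax (n : ℕ) : |S.f n z| ≤ |S.f l z| := by
    rcases eq_or_ne n l with rfl | hnl
    · rfl
    rcases eq_or_ne n a with rfl | hna
    · rw [hza, hzl, hts]
    · rw [hzl]
      simpa [hz, S.biorth, hnl, hna] using hs n
  calc ‖w + t • S.e a‖ = ‖z - S.f l z • S.e l‖ := by rw [hzl, hz, add_sub_cancel_right]
    _ ≤ ‖z - S.f a z • S.e a‖ := (h z l a hmax hla).trans (min_le_right _ _)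
    _ = ‖w + s • S.e l‖ := by rw [hza, hz, add_right_comm, add_sub_cancel_right]

theorem norm_add_smul_e_le (h : S.LargestCoordRemoval) {w : X} {l a : ℕ} (hla : l < a)
    (hwl : S.f l w = 0) (hwa : S.f a w = 0) {r s : ℝ} (hs : ∀ n, |S.f n w| ≤ |s|)
    (hrs : |r| ≤ |s|) : ‖w + r • S.e a‖ ≤ ‖w + s • S.e l‖ := by
  refine (norm_add_smul_le_max w (S.e a) hrs).trans (max_le ?_ ?_)
  · exact h.norm_add_smul_e_le_of_abs_eq hla hwl hwa hs rfl
  · rw [sub_eq_add_neg, ← neg_smul]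
    exact h.norm_add_smul_e_le_of_abs_eq hla hwl hwa hs (abs_neg s)

theorem norm_sub_sub_P_le_norm_sub_P_insert (h : S.LargestCoordRemoval) {l a : ℕ}
    (hl : ∀ n, |S.f n x| ≤ |S.f l x|) (hla : l < a) {B : Finset ℕ} (hlB : l ∉ B) (haB : a ∉ B) :
    ‖x - S.f l x • S.e l - S.P B x‖ ≤ ‖x - S.P (insert a B) x‖ := by
  set w := x - S.P (insert a B) x - S.f l x • S.e l with hw
  have hf (n : ℕ) : S.f n w = if n ∈ insert l (insert a B) then 0 else S.f n x := by
    rcases eq_or_ne n l with rfl | hnl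
    · simp [hw, S.biorth, f_P, hlB, hla.ne]
    · by_cases hn : n ∈ insert a B <;> simp_all [S.biorth, f_P]
  have hwx (n : ℕ) : |S.f n w| ≤ |S.f l x| := by
    rw [hf]
    split_ifs
    · simp
    · exact hl n
  calc ‖x - S.f l x • S.e l - S.P B x‖ = ‖w + S.f a x • S.e a‖ := by
        rw [hw, P_insert haB]; congr 1; abel
    _ ≤ ‖w + S.f l x • S.e l‖ :=
        h.norm_add_smul_e_le hla (by simp [hf]) (by simp [hf]) hwx (hl a)
    _ = ‖x - S.P (insert a B) x‖ := by rw [hw, sub_add_cancel]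

theorem exists_subset_norm_sub_P_le (h : S.LargestCoordRemoval) {l m : ℕ}
    (hl : ∀ n, |S.f n x| ≤ |S.f l x|) {A : Finset ℕ} (hlA : ∀ i ∈ A, l < i)
    (hA : A.card ≤ m + 1) :
    ∃ B ⊆ A, B.card ≤ m ∧
      ‖x - S.f l x • S.e l - S.P B (x - S.f l x • S.e l)‖ ≤ ‖x - S.P A x‖ := by
  rcases A.eq_empty_or_nonempty with rfl | ⟨a, ha⟩
  · refine ⟨∅, subset_rfl, m.zero_le, ?_⟩
    simpa [P] using (h x l (l + 1) hl l.lt_succ_self).trans (min_le_left _ _)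
  · have hlB : l ∉ A.erase a := fun hl' => (hlA l (Finset.mem_of_mem_erase hl')).false
    refine ⟨A.erase a, A.erase_subset a, by grind, ?_⟩
    rw [P_sub_smul_e_of_notMem hlB]
    simpa only [Finset.insert_erase ha] using
      h.norm_sub_sub_P_le_norm_sub_P_insert hl (hlA a ha) hlB (A.notMem_erase a)

theorem norm_sub_G_le_norm_sub_P (h : S.LargestCoordRemoval) {ρ : ℕ → ℕ} {m : ℕ} {A : Finset ℕ}
    (hρ : S.IsGreedyOrdering x ρ) (hA : A.card ≤ m) (hlt : ∀ i ∈ A, ∀ k < m, ρ k < i) :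
    ‖x - S.G x ρ m‖ ≤ ‖x - S.P A x‖ := by
  induction m generalizing x ρ A with
  | zero =>
    obtain rfl : A = ∅ := by simpa using hA
    simp [G, P]
  | succ m ih =>
    obtain ⟨B, hBA, hB, hstep⟩ := h.exists_subset_norm_sub_P_le hρ.abs_le_apply_zero
      (fun i hi => hlt i hi 0 m.succ_pos) hA
    rw [G_succ hρ.1, ← sub_sub]
    exact (ih hρ.tail hB fun i hi k hk => hlt i (hBA hi) (k + 1) (by lia)).trans hstep

end LargestCoordRemoval

end SchauderBasisSys

theorem stmt_12_general {X : Type*} [NormedAddCommGroup X] [NormedSpace ℝ X]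
    (S : SchauderBasisSys X) :
    (∀ (x : X) (ρ : ℕ → ℕ) (m : ℕ) (A : Finset ℕ),
        S.IsGreedyOrdering x ρ → A.card ≤ m →
        (∀ i ∈ A, ∀ j ∈ Lam ρ m, j < i) →
        ‖x - S.G x ρ m‖ ≤ ‖x - S.P A x‖) ↔
      (∀ (x : X) (ρ : ℕ → ℕ), S.IsGreedyOrdering x ρ → ∀ j : ℕ, ρ 0 < j →
        ‖x - S.G x ρ 1‖ ≤ min ‖x‖ ‖x - S.f j x • S.e j‖) := by
  refine ⟨fun h x ρ hρ j hj => le_min ?_ ?_, fun h x ρ m A hρ hA hlt => ?_⟩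
  · simpa [P] using h x ρ 1 ∅ hρ (by simp) (by simp)
  · simpa [P] using h x ρ 1 {j} hρ (by simp) (by simpa [Lam] using hj)
  · exact (largestCoordRemoval_of_norm_sub_G_one_le h).norm_sub_G_le_norm_sub_P hρ hA
      (by simpa [Lam] using hlt)

/-- A Schauder basis satisfies `‖x - G_m(x)‖ ≤ σ̃^R_m(x)` for all `x`,
`m` and greedy orderings (is `1`-reverse partially greedy in the `σ̃^R` sense) if and only
if for every `x`, every greedy ordering `ρ` for `x`, and every index
`j > β_1(x) = ρ(0)`, one has `‖x - G_1(x)‖ ≤ min(‖x‖, ‖x - e_j^*(x) e_j‖)`. -/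
theorem stmt_12 {X : Type*} [NormedAddCommGroup X] [NormedSpace ℝ X] [CompleteSpace X]
    (S : SchauderBasisSys X) :
    (∀ (x : X) (ρ : ℕ → ℕ) (m : ℕ) (A : Finset ℕ),
        S.IsGreedyOrdering x ρ → A.card ≤ m →
        (∀ i ∈ A, ∀ j ∈ Lam ρ m, j < i) →
        ‖x - S.G x ρ m‖ ≤ ‖x - S.P A x‖) ↔
      (∀ (x : X) (ρ : ℕ → ℕ), S.IsGreedyOrdering x ρ → ∀ j : ℕ, ρ 0 < j →
        ‖x - S.G x ρ 1‖ ≤ min ‖x‖ ‖x - S.f j x • S.e j‖) :=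
  stmt_12_general S
end
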